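/- arXiv:2506.22145 — 6 statements merged into one kernel-verified Lean document; each statement's English description precedes it below -/
import Mathlib

section
/- Let T be a Cayley tree labelled with [n]_0. For every non-root vertex i ∈ {1,…,n}, the number of children of i in T equals the number of positions j ∈ {1,…,n−1} with blob(T)(j) = i. The number of children of the root 0 equals the number of positions j ∈ {1,…,n−1} with blob(T)(j) = 0, plus one. -/
/-!
Move every record of `T` other than `n` to the next record and fix every other vertex. Since `n` is
a record, this sends `{1,…,n-1}` bijectively onto the non-root vertices other than the smallest
record `r₁`, and the code at `j` is the parent of the image of `j`. Hence the values of the code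
are, with multiplicity, the parents of the vertices other than `r₁`. The one missing value is the
parent of `r₁`, which is the root: the ancestor of `r₁` that is a child of the root is a record, so
it is `r₁` itself.
-/

open scoped Classical

namespace WearyParking

/-- `f` is the parent function of a Cayley tree on `{0,…,n}` rooted at `0`:
`f 0 = 0`, `f` is pinned to `0` outside `{1,…,n}`, `f` maps `{1,…,n}` into `{0,…,n}`,
and every vertex reaches the root under iteration. -/
def IsCayleyTree (n : ℕ) (f : ℕ → ℕ) : Prop :=
  f 0 = 0 ∧ (∀ i, n < i → f i = 0) ∧
  (∀ i, 1 ≤ i → i ≤ n → f i ≤ n) ∧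
  (∀ i, 1 ≤ i → i ≤ n → ∃ k, f^[k] i = 0)

/-- A non-root vertex `i` is a record of the tree if it is greater than
all of its ancestors. -/
def IsRecord (n : ℕ) (f : ℕ → ℕ) (i : ℕ) : Prop :=
  1 ≤ i ∧ i ≤ n ∧ ∀ k, 1 ≤ k → f^[k] i < i

/-- The smallest record larger than `i`. -/
noncomputable def nextRecord (n : ℕ) (f : ℕ → ℕ) (i : ℕ) : ℕ :=
  sInf {j | IsRecord n f j ∧ i < j}

/-- The record (blob) code of the tree, a function on `{1,…,n-1}`:
at a non-record position it records the parent, and at a record position it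
records the parent of the next record. -/
noncomputable def blob (n : ℕ) (f : ℕ → ℕ) (i : ℕ) : ℕ :=
  if IsRecord n f i then f (nextRecord n f i) else f i

/-- Number of children of vertex `v` in the tree. -/
def numChildren (n : ℕ) (f : ℕ → ℕ) (v : ℕ) : ℕ :=
  ((Finset.Icc 1 n).filter fun i => f i = v).card

/-- The list of the first `i+1` vertices visited by the priority-first search:
start at the root `0`; at each step visit the smallest unvisited vertex whose
parent has been visited. -/
noncomputable def wearyList (n : ℕ) (f : ℕ → ℕ) : ℕ → List ℕ
  | 0 => [0]
  | (i + 1) =>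
      wearyList n f i ++
        [sInf {v | 1 ≤ v ∧ v ≤ n ∧ v ∉ wearyList n f i ∧ f v ∈ wearyList n f i}]

/-- The weary permutation of the tree: `weary n f i` is the `i`-th vertex visited
by the priority-first search (with `weary n f 0 = 0`). -/
noncomputable def weary (n : ℕ) (f : ℕ → ℕ) (i : ℕ) : ℕ :=
  (wearyList n f n).getD i 0

/-- The inverse of the weary permutation. -/
noncomputable def wearyInv (n : ℕ) (f : ℕ → ℕ) (v : ℕ) : ℕ :=
  sInf {i | weary n f i = v}

/-- The preference sequence `π_T` of the tree: `π_T i = ω_T⁻¹ (f_T i) + 1`. -/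
noncomputable def pref (n : ℕ) (f : ℕ → ℕ) (i : ℕ) : ℕ :=
  wearyInv n f (f i) + 1

/-- Parent function of the priority tree `pt(T)`: `ω_T⁻¹ ∘ f_T ∘ ω_T`. -/
noncomputable def prioParent (n : ℕ) (f : ℕ → ℕ) (i : ℕ) : ℕ :=
  wearyInv n f (f (weary n f i))

/-- The list of spots occupied by cars `1,…,c` in the classical parking process:
car `c` parks at the first spot `≥ π c` not occupied by an earlier car. -/
noncomputable def spotList (π : ℕ → ℕ) : ℕ → List ℕ
  | 0 => []
  | (c + 1) => spotList π c ++ [sInf {s | π (c + 1) ≤ s ∧ s ∉ spotList π c}]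

/-- The spot where car `c` ends up in the classical parking process. -/
noncomputable def spot (π : ℕ → ℕ) (c : ℕ) : ℕ :=
  (spotList π c).getD (c - 1) 0

/-- `π` is a parking function of length `n`: preferences lie in `{1,…,n}`
(pinned to `1` outside `{1,…,n}`) and every car parks within the `n` spots. -/
def IsParkingFun (n : ℕ) (π : ℕ → ℕ) : Prop :=
  (∀ c, 1 ≤ c → c ≤ n → 1 ≤ π c ∧ π c ≤ n) ∧
  (∀ c, c = 0 ∨ n < c → π c = 1) ∧
  (∀ c, 1 ≤ c → c ≤ n → spot π c ≤ n)

/-- The bird's-eye permutation `ω_π`: the car parked at spot `i` (and `0` at `0`). -/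
noncomputable def birdsEye (n : ℕ) (π : ℕ → ℕ) (i : ℕ) : ℕ :=
  if i = 0 then 0 else sInf {c | 1 ≤ c ∧ c ≤ n ∧ spot π c = i}

/-- The inverse of the bird's-eye permutation. -/
noncomputable def birdsEyeInv (n : ℕ) (π : ℕ → ℕ) (c : ℕ) : ℕ :=
  sInf {i | birdsEye n π i = c}

/-- Parent function of the parking tree `PT(π)`: `f_π i = ω_π (π i - 1)`. -/
noncomputable def ptParent (n : ℕ) (π : ℕ → ℕ) (i : ℕ) : ℕ :=
  if 1 ≤ i ∧ i ≤ n then birdsEye n π (π i - 1) else 0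

/-- `v` is a record of the parking function `π`, i.e. a left-to-right maximum of
the word `ω_π(1) ω_π(2) ⋯ ω_π(n)`. -/
def IsPfRecord (n : ℕ) (π : ℕ → ℕ) (v : ℕ) : Prop :=
  ∃ i, 1 ≤ i ∧ i ≤ n ∧ birdsEye n π i = v ∧ ∀ j, 1 ≤ j → j < i → birdsEye n π j < v

/-- The waiting time of the tree: `wait T = Σ_{i=1}^n (i - f_{pt(T)}(i))`. -/
noncomputable def wait (n : ℕ) (f : ℕ → ℕ) : ℕ :=
  ∑ i ∈ Finset.Icc 1 n, (i - prioParent n f i)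

/-- The number of priority small ascents of the tree. -/
noncomputable def psa (n : ℕ) (f : ℕ → ℕ) : ℕ :=
  ((Finset.Icc 1 n).filter fun i => prioParent n f i = i - 1).card

/-- The number of children of the root. -/
def degRoot (n : ℕ) (f : ℕ → ℕ) : ℕ := numChildren n f 0

/-- The children sequence: `chseq n f j` is the number of vertices with exactly
`j` children. -/
def chseq (n : ℕ) (f : ℕ → ℕ) (j : ℕ) : ℕ :=
  ((Finset.Icc 0 n).filter fun v => numChildren n f v = j).card

/-- The number of probes of the parking function: `n` plus the total displacement. -/
noncomputable def probes (n : ℕ) (π : ℕ → ℕ) : ℕ :=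
  n + ∑ c ∈ Finset.Icc 1 n, (spot π c - π c)

/-- The number of lucky cars of `π`: cars parking at their preferred spot. -/
noncomputable def lucky (n : ℕ) (π : ℕ → ℕ) : ℕ :=
  ((Finset.Icc 1 n).filter fun c => spot π c = π c).card

/-- The number of `1`s in `π`. -/
def ones (n : ℕ) (π : ℕ → ℕ) : ℕ :=
  ((Finset.Icc 1 n).filter fun c => π c = 1).card

/-- The multiplicity of the value `v` in the parking function `π`. -/
def multIn (n : ℕ) (π : ℕ → ℕ) (v : ℕ) : ℕ :=
  ((Finset.Icc 1 n).filter fun c => π c = v).card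

/-- The multiplicity sequence: `multSeq n π j` is the number of values in
`{1,…,n+1}` appearing exactly `j` times in `π`. -/
def multSeq (n : ℕ) (π : ℕ → ℕ) (j : ℕ) : ℕ :=
  ((Finset.Icc 1 (n + 1)).filter fun v => multIn n π v = j).card

/-- The tree is a path graph with endpoints `0` and `n`: every vertex has at most
one child and `n` is the (unique) leaf. -/
def IsPathTree (n : ℕ) (f : ℕ → ℕ) : Prop :=
  (∀ v, v ≤ n → numChildren n f v ≤ 1) ∧ numChildren n f n = 0

/-- `g` is the parent map of a rooted forest on `{1,…,n}` rooted at `{1,…,k}`: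
the vertices `1,…,k` are roots (fixed points), every other vertex of `{1,…,n}` has a
parent in `{1,…,n}`, every vertex reaches one of the roots under iteration, and `g`
is pinned to `0` outside `{1,…,n}`. -/
def IsForestRootedAt (n k : ℕ) (g : ℕ → ℕ) : Prop :=
  (∀ i, 1 ≤ i → i ≤ k → g i = i) ∧
  (∀ i, k < i → i ≤ n → 1 ≤ g i ∧ g i ≤ n) ∧
  (∀ i, 1 ≤ i → i ≤ n → ∃ m, 1 ≤ g^[m] i ∧ g^[m] i ≤ k) ∧
  (∀ i, i = 0 ∨ n < i → g i = 0)

theorem card_filter_eq_count_map {α β : Type*} [DecidableEq β] (s : Finset α) (g : α → β) (b : β) :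
    (s.filter fun a => g a = b).card = (s.val.map g).count b := by
  simp only [Multiset.count_map, eq_comm (a := b)]
  rfl

section Advance

variable {α : Type*} [ConditionallyCompleteLinearOrder α] {R : Set α} {a m r : α}

/-- The map moving each element of `R` to the next larger element of `R` and fixing every element
outside `R`. A greatest element of `R` goes to the junk value `sInf ∅`. -/
noncomputable def advance (R : Set α) (a : α) : α :=
  if a ∈ R then sInf (R ∩ Set.Ioi a) else a

theorem advance_of_notMem (ha : a ∉ R) : advance R a = a :=
  if_neg ha

variable [WellFoundedLT α]

theorem isLeast_advance (hm : IsGreatest R m) (ha : a ∈ R) (ham : a ≠ m) :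
    IsLeast (R ∩ Set.Ioi a) (advance R a) := by
  have hne : (R ∩ Set.Ioi a).Nonempty := ⟨m, hm.1, (hm.2 ha).lt_of_ne ham⟩
  rw [advance, if_pos ha]
  exact isLeast_csInf hne

theorem strictMonoOn_advance (hm : IsGreatest R m) : StrictMonoOn (advance R) (R \ {m}) :=
  fun _ ⟨ha, ham⟩ _ ⟨hb, hbm⟩ hab =>
    ((isLeast_advance hm ha ham).2 ⟨hb, hab⟩).trans_lt (isLeast_advance hm hb hbm).1.2

theorem advance_mem_iff (hm : IsGreatest R m) (ham : a ≠ m) : advance R a ∈ R ↔ a ∈ R := by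
  by_cases ha : a ∈ R
  · exact iff_of_true (isLeast_advance hm ha ham).1.1 ha
  · rw [advance_of_notMem ha]

theorem injOn_advance (hm : IsGreatest R m) : Set.InjOn (advance R) {m}ᶜ := by
  intro a ham b hbm hab
  have hiff : a ∈ R ↔ b ∈ R := by
    rw [← advance_mem_iff hm ham, hab, advance_mem_iff hm hbm]
  by_cases ha : a ∈ R
  · exact (strictMonoOn_advance hm).injOn ⟨ha, ham⟩ ⟨hiff.mp ha, hbm⟩ hab
  · rwa [advance_of_notMem ha, advance_of_notMem (mt hiff.mpr ha)] at hab

theorem injOn_advance_erase (s : Finset α) (hm : IsGreatest R m) :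
    Set.InjOn (advance R) (s.erase m) :=
  (injOn_advance hm).mono fun _ => Finset.ne_of_mem_erase

theorem advance_ne_of_isLeast (hr : IsLeast R r) (hm : IsGreatest R m) (ham : a ≠ m) :
    advance R a ≠ r := by
  intro h
  have ha : a ∈ R := (advance_mem_iff hm ham).mp (h ▸ hr.1)
  exact ((hr.2 ha).trans_lt (isLeast_advance hm ha ham).1.2).ne' h

theorem image_advance_erase {s : Finset α} (hRs : R ⊆ s) (hr : IsLeast R r)
    (hm : IsGreatest R m) : (s.erase m).image (advance R) = s.erase r := by
  apply Finset.eq_of_subset_of_card_le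
  · simp only [Finset.image_subset_iff, Finset.mem_erase]
    rintro a ⟨ham, has⟩
    refine ⟨advance_ne_of_isLeast hr hm ham, ?_⟩
    by_cases ha : a ∈ R
    · exact hRs (isLeast_advance hm ha ham).1.1
    · rwa [advance_of_notMem ha]
  · rw [Finset.card_image_of_injOn (injOn_advance_erase s hm), Finset.card_erase_of_mem (hRs hr.1),
      Finset.card_erase_of_mem (hRs hm.1)]

theorem cons_map_advance_erase {s : Finset α} (hRs : R ⊆ s) (hr : IsLeast R r)
    (hm : IsGreatest R m) : r ::ₘ (s.erase m).val.map (advance R) = s.val := by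
  rw [← Finset.image_val_of_injOn (injOn_advance_erase s hm), image_advance_erase hRs hr hm,
    Finset.erase_val, Multiset.cons_erase (hRs hr.1)]

end Advance

section Tree

variable {n : ℕ} {f : ℕ → ℕ}

theorem IsCayleyTree.apply_le (hf : IsCayleyTree n f) (i : ℕ) : f i ≤ n := by
  obtain ⟨hroot, hout, hle, -⟩ := hf
  rcases Nat.eq_zero_or_pos i with rfl | hi
  · exact hroot.trans_le n.zero_le
  rcases le_or_gt i n with hin | hni
  · exact hle i hi hin
  · exact (hout i hni).trans_le n.zero_le

theorem IsCayleyTree.exists_iterate_eq_zero (hf : IsCayleyTree n f) (i : ℕ) :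
    ∃ k, f^[k] i = 0 := by
  obtain ⟨-, hout, -, hreach⟩ := hf
  rcases Nat.eq_zero_or_pos i with rfl | hi
  · exact ⟨0, rfl⟩
  rcases le_or_gt i n with hin | hni
  · exact hreach i hi hin
  · exact ⟨1, hout i hni⟩

theorem IsCayleyTree.eq_zero_of_mem_periodicPts (hf : IsCayleyTree n f) {i : ℕ}
    (hi : i ∈ Function.periodicPts f) : i = 0 := by
  obtain ⟨k, hk⟩ := hf.exists_iterate_eq_zero i
  have hfix : Function.IsFixedPt f i := by
    refine Function.isPeriodicPt_of_mem_periodicPts_of_isPeriodicPt_iterate (m := 1) (n := k) hi ?_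
    rw [hk]
    exact hf.1
  rw [← hk, hfix.iterate k]

theorem IsCayleyTree.isGreatest_isRecord (hf : IsCayleyTree n f) (hn : 1 ≤ n) :
    IsGreatest {i | IsRecord n f i} n := by
  refine ⟨⟨hn, le_rfl, fun k hk => ?_⟩, fun i hi => hi.2.1⟩
  have hle : f^[k] n ≤ n := by
    obtain ⟨k, rfl⟩ := Nat.exists_eq_add_of_le' hk
    rw [Function.iterate_succ_apply']
    exact hf.apply_le _
  refine hle.lt_of_ne fun hcycle => ?_
  have hn0 : n = 0 := hf.eq_zero_of_mem_periodicPts (Function.mk_mem_periodicPts hk hcycle)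
  omega

theorem isRecord_of_apply_eq_zero (hroot : f 0 = 0) {i : ℕ} (hi : 1 ≤ i) (hin : i ≤ n)
    (h : f i = 0) : IsRecord n f i := by
  refine ⟨hi, hin, fun k hk => ?_⟩
  obtain ⟨k, rfl⟩ := Nat.exists_eq_add_of_le' hk
  rw [Function.iterate_succ_apply, h, Function.iterate_fixed hroot]
  exact hi

theorem IsCayleyTree.exists_ancestor_apply_eq_zero (hf : IsCayleyTree n f) {i : ℕ} (hi : i ≠ 0) :
    ∃ k, f^[k] i ≠ 0 ∧ f (f^[k] i) = 0 := by
  simp only [← Function.iterate_succ_apply']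
  exact Nat.exists_not_and_succ_of_not_zero_of_exists (p := fun k => f^[k] i = 0) hi
    (hf.exists_iterate_eq_zero i)

theorem IsCayleyTree.apply_eq_zero_of_isLeast_isRecord (hf : IsCayleyTree n f) {r : ℕ}
    (hr : IsLeast {i | IsRecord n f i} r) : f r = 0 := by
  obtain ⟨hr_pos, hrn, hr_lt⟩ := hr.1
  obtain ⟨k, hk, hfk⟩ := hf.exists_ancestor_apply_eq_zero (Nat.one_le_iff_ne_zero.mp hr_pos)
  rcases Nat.eq_zero_or_pos k with rfl | hk_pos
  · exact hfk
  · have hlt : f^[k] r < r := hr_lt k hk_pos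
    have hrec : IsRecord n f (f^[k] r) :=
      isRecord_of_apply_eq_zero hf.1 (Nat.one_le_iff_ne_zero.mpr hk) (hlt.le.trans hrn) hfk
    exact absurd (hr.2 hrec) hlt.not_ge

theorem blob_eq_comp_advance : blob n f = f ∘ advance {i | IsRecord n f i} :=
  funext fun _ => (apply_ite f _ _ _).symm

theorem IsCayleyTree.zero_cons_map_blob (hf : IsCayleyTree n f) (hn : 1 ≤ n) :
    0 ::ₘ (Finset.Icc 1 (n - 1)).val.map (blob n f) = (Finset.Icc 1 n).val.map f := by
  have hm := hf.isGreatest_isRecord hn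
  obtain ⟨r, hr⟩ : ∃ r, IsLeast {i | IsRecord n f i} r := ⟨_, isLeast_csInf ⟨n, hm.1⟩⟩
  have hRs : {i | IsRecord n f i} ⊆ (Finset.Icc 1 n : Finset ℕ) :=
    fun i hi => Finset.mem_coe.mpr (Finset.mem_Icc.mpr ⟨hi.1, hi.2.1⟩)
  have hdom : Finset.Icc 1 (n - 1) = (Finset.Icc 1 n).erase n := by
    rw [Finset.Icc_erase_right, Finset.Icc_sub_one_right_eq_Ico_of_not_isMin]
    exact not_isMin_of_lt hn
  rw [← hf.apply_eq_zero_of_isLeast_isRecord hr, blob_eq_comp_advance, ← Multiset.map_map,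
    ← Multiset.map_cons, hdom, cons_map_advance_erase hRs hr hm]

end Tree

/-- In the record code of a Cayley tree, each non-root vertex `i`
appears as many times as it has children, and the root `0` appears (number of
children of the root) minus one times. -/
theorem stmt0 (n : ℕ) (hn : 1 ≤ n) (f : ℕ → ℕ) (hf : IsCayleyTree n f) :
    (∀ i, 1 ≤ i → i ≤ n →
        numChildren n f i =
          ((Finset.Icc 1 (n - 1)).filter fun j => blob n f j = i).card) ∧
    numChildren n f 0 =
      ((Finset.Icc 1 (n - 1)).filter fun j => blob n f j = 0).card + 1 := by
  simp only [numChildren, card_filter_eq_count_map, ← hf.zero_cons_map_blob hn]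
  exact ⟨fun i hi _ => Multiset.count_cons_of_ne (Nat.one_le_iff_ne_zero.mp hi) _,
    Multiset.count_cons_self _ _⟩

end WearyParking
end

section
/- Let T be a Cayley tree labelled with [n]_0. The following are equivalent: (1) T is an increasing tree, i.e., f_T(i) < i for every i ∈ {1,…,n}; (2) every vertex of {1,…,n} is a record of T (equivalently, every bonsai in the record decomposition of T consists of a single node); (3) the record code of T is a subexceedant function, i.e., blob(T)(i) ≤ i for every i ∈ {1,…,n−1}. -/
/-!
If parents are smaller than their children on `{1,…,i}`, then `f` maps every initial segment
`{0,…,j}` with `j ≤ i` into itself, so all ancestors of `i` are at most `f i < i` and `i` is a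
record; conversely a record exceeds its parent. If all vertices are records, the record following
`i` is `i + 1`, so the code at `i` is `f (i + 1) ≤ i`.

For a subexceedant code no induction is needed: a record exceeds its parent in any case, and at a
non-record `i` the code is `f i`, so `f i ≤ i`, strictly because a tree has no cycles. The code
says nothing about `n`, but `n` is always a record.
-/

open scoped Classical

namespace WearyParking

lemma eq_of_isPeriodicPt_of_iterate_eq {α : Type*} {f : α → α} {x a : α} {k m : ℕ}
    (ha : Function.IsFixedPt f a) (hx : Function.IsPeriodicPt f k x) (hk : 0 < k)
    (hxa : f^[m] x = a) : x = a :=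
  (hx.iterate m).eq_of_apply_eq ((ha.isPeriodicPt k).iterate m) hk hk
    (hxa.trans (ha.iterate m).symm)

lemma mapsTo_Iic_of_forall_le {f : ℕ → ℕ} {m : ℕ} (hf0 : f 0 = 0)
    (h : ∀ i, 1 ≤ i → i ≤ m → f i ≤ m) : Set.MapsTo f (Set.Iic m) (Set.Iic m) := by
  rintro (_ | i) hi
  · exact hf0.trans_le m.zero_le
  · exact h (i + 1) i.succ_pos hi

section

variable {n i : ℕ} {f : ℕ → ℕ}

lemma IsCayleyTree.iterate_ne_self (hf : IsCayleyTree n f) (hi : 1 ≤ i) (hin : i ≤ n) {k : ℕ}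
    (hk : 1 ≤ k) : f^[k] i ≠ i := by
  intro hcycle
  obtain ⟨m, hm⟩ := hf.2.2.2 i hi hin
  have hi0 : i = 0 := eq_of_isPeriodicPt_of_iterate_eq hf.1 hcycle hk hm
  omega

lemma IsCayleyTree.isRecord_top (hf : IsCayleyTree n f) (hn : 1 ≤ n) : IsRecord n f n := by
  have hmaps := mapsTo_Iic_of_forall_le hf.1 hf.2.2.1
  exact ⟨hn, le_rfl, fun k hk =>
    lt_of_le_of_ne (hmaps.iterate k Set.self_mem_Iic) (hf.iterate_ne_self hn le_rfl hk)⟩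

lemma IsRecord.parent_lt (h : IsRecord n f i) : f i < i :=
  h.2.2 1 le_rfl

lemma isRecord_of_forall_parent_lt (hf0 : f 0 = 0) (hi : 1 ≤ i) (hin : i ≤ n)
    (h : ∀ j, 1 ≤ j → j ≤ i → f j < j) : IsRecord n f i := by
  refine ⟨hi, hin, fun k hk => ?_⟩
  obtain ⟨k, rfl⟩ := Nat.exists_eq_add_of_le' hk
  have hlt : f i < i := h i hi le_rfl
  have hmaps : Set.MapsTo f (Set.Iic (f i)) (Set.Iic (f i)) :=
    mapsTo_Iic_of_forall_le hf0 fun j hj hji => (h j hj (hji.trans hlt.le)).le.trans hji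
  calc f^[k + 1] i = f^[k] (f i) := Function.iterate_succ_apply f k i
    _ ≤ f i := hmaps.iterate k Set.self_mem_Iic
    _ < i := hlt

lemma nextRecord_eq_succ (h : IsRecord n f (i + 1)) : nextRecord n f i = i + 1 :=
  IsLeast.csInf_eq ⟨⟨h, i.lt_succ_self⟩, fun _ hj => hj.2⟩

lemma blob_eq_parent_succ (hi : IsRecord n f i) (hi' : IsRecord n f (i + 1)) :
    blob n f i = f (i + 1) := by
  rw [blob, if_pos hi, nextRecord_eq_succ hi']

lemma IsCayleyTree.parent_lt_of_blob_le (hf : IsCayleyTree n f) (hi : 1 ≤ i) (hin : i ≤ n)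
    (hblob : blob n f i ≤ i) : f i < i := by
  by_cases hrec : IsRecord n f i
  · exact hrec.parent_lt
  · rw [blob, if_neg hrec] at hblob
    exact lt_of_le_of_ne hblob (hf.iterate_ne_self hi hin (k := 1) le_rfl)

end

/-- For a Cayley tree the following are equivalent: it is increasing;
every vertex in `{1,…,n}` is a record; the record code is a subexceedant function. -/
theorem stmt2 (n : ℕ) (f : ℕ → ℕ) (hf : IsCayleyTree n f) :
    List.TFAE [
      ∀ i, 1 ≤ i → i ≤ n → f i < i,
      ∀ i, 1 ≤ i → i ≤ n → IsRecord n f i,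
      ∀ i, 1 ≤ i → i ≤ n - 1 → blob n f i ≤ i] := by
  tfae_have 1 → 2 := fun h i hi hin =>
    isRecord_of_forall_parent_lt hf.1 hi hin fun j hj hji => h j hj (hji.trans hin)
  tfae_have 2 → 3 := by
    intro h i hi hin
    have hsucc : IsRecord n f (i + 1) := h (i + 1) (by omega) (by omega)
    rw [blob_eq_parent_succ (h i hi (by omega)) hsucc]
    exact Nat.le_of_lt_succ hsucc.parent_lt
  tfae_have 3 → 1 := by
    intro h i hi hin
    rcases hin.eq_or_lt with rfl | hlt
    · exact (hf.isRecord_top hi).parent_lt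
    · exact hf.parent_lt_of_blob_le hi hin (h i hi (Nat.le_sub_one_of_lt hlt))
  tfae_finish

end WearyParking
end

section
/- Let n ≥ 1 and 1 ≤ k ≤ n. The number f(n,k) of rooted forests with vertex set {1,…,n} that have exactly k connected components in which the vertices 1, 2, …, k lie in pairwise distinct components (each being the root of its component) satisfies n^k · f(n,k) = k · n^{n−1}; in particular, for k ≤ n−1, f(n,k) = k·n^{n−k−1}. -/
/-!
Let `F R` be the number of forests on a set of `n` vertices with root set `R`. Cutting the edge
from a non-root `r` to its parent `w` makes `r` a root, and `w` then lies outside the tree of `r`;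
conversely, a root `r` can be grafted onto any vertex `w` outside its own tree. Hence, for
`r ∈ R`, `F (R \ {r})` counts the pairs of a forest with root set `R` and a vertex `w` that does
not descend from `r`. Given such a forest, each `w` descends from exactly one root, so summing
over `r ∈ R` gives `∑ r ∈ R, F (R \ {r}) = (#R - 1) * n * F R`. By symmetry all terms on the left
are equal, and Cayley's formula follows by removing roots one at a time, starting from the forest
all of whose vertices are roots.
-/

open scoped Classical

namespace WearyParking

section RootedForests

open Finset Function

variable {α β : Type*}

/-- `IsAncestor g a x` says that the path `x, g x, g (g x), …` along the parent map `g` visits `a`.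
Every vertex is an ancestor of itself. -/
def IsAncestor (g : α → α) (a x : α) : Prop :=
  ∃ m, g^[m] x = a

lemma IsAncestor.refl (g : α → α) (x : α) : IsAncestor g x x :=
  ⟨0, rfl⟩

lemma IsAncestor.of_apply {g : α → α} {a x : α} : IsAncestor g a (g x) → IsAncestor g a x :=
  fun ⟨m, hm⟩ => ⟨m + 1, hm⟩

lemma IsAncestor.trans {g : α → α} {a b x : α} :
    IsAncestor g a b → IsAncestor g b x → IsAncestor g a x := by
  rintro ⟨m, rfl⟩ ⟨p, rfl⟩
  exact ⟨m + p, iterate_add_apply g m p x⟩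

lemma IsAncestor.map {g : α → α} {h : β → β} {φ : α → β} {a x : α} (hφ : Semiconj φ g h) :
    IsAncestor g a x → IsAncestor h (φ a) (φ x) := by
  rintro ⟨m, rfl⟩
  exact ⟨m, ((hφ.iterate_right m).eq x).symm⟩

lemma IsAncestor.eq_of_isFixedPt {g : α → α} {r s x : α} (hr : IsFixedPt g r)
    (hs : IsFixedPt g s) : IsAncestor g r x → IsAncestor g s x → r = s := by
  rintro ⟨m, rfl⟩ ⟨p, rfl⟩
  calc g^[m] x = g^[p] (g^[m] x) := (iterate_fixed hr p).symm
    _ = g^[m] (g^[p] x) := Commute.iterate_iterate_self g p m x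
    _ = g^[p] x := iterate_fixed hs m

lemma IsAncestor.eq_of_isPeriodicPt {g : α → α} {s x : α} {n : ℕ} (hs : IsFixedPt g s)
    (hx : IsPeriodicPt g n x) (hn : 0 < n) : IsAncestor g s x → x = s := by
  rintro ⟨p, hp⟩
  exact (hx.iterate p).eq_of_apply_eq_same ((hs.isPeriodicPt n).iterate p) hn
    (hp.trans (iterate_fixed hs p).symm)

section Update

variable [DecidableEq α] {g : α → α} {r w x s : α}

lemma iterate_update_of_not_isAncestor (h : ¬ IsAncestor g r x) (w : α) (m : ℕ) :
    (update g r w)^[m] x = g^[m] x := by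
  induction m with
  | zero => rfl
  | succ m ih =>
    rw [iterate_succ_apply', iterate_succ_apply', ih, update_of_ne fun hm => h ⟨m, hm⟩]

lemma IsAncestor.update_of_not (hs : IsAncestor g s x) (h : ¬ IsAncestor g r x) (w : α) :
    IsAncestor (update g r w) s x :=
  hs.imp fun m hm => (iterate_update_of_not_isAncestor h w m).trans hm

lemma isAncestor_update_self_iff (w : α) :
    IsAncestor (update g r w) r x ↔ IsAncestor g r x := by
  refine ⟨fun h => ?_, fun h => ?_⟩ <;> by_contra hx
  · exact hx (h.imp fun m hm => (iterate_update_of_not_isAncestor hx w m).symm.trans hm)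
  · refine hx (h.imp fun m hm => ?_)
    have hrestore := iterate_update_of_not_isAncestor hx (g r) m
    rwa [update_idem, update_eq_self, hm, eq_comm] at hrestore

end Update

/-- `IsRootedForest R g` says that `g` is the parent map of a rooted forest on the vertex set `α`
with root set `R`, each root being its own parent. -/
structure IsRootedForest (R : Finset α) (g : α → α) : Prop where
  isFixedPt : ∀ r ∈ R, IsFixedPt g r
  exists_isAncestor : ∀ x, ∃ r ∈ R, IsAncestor g r x

namespace IsRootedForest

variable {R : Finset α} {g : α → α} {r w : α}

lemma existsUnique_root (hg : IsRootedForest R g) (x : α) : ∃! r, r ∈ R ∧ IsAncestor g r x := by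
  obtain ⟨r, hr, hrx⟩ := hg.exists_isAncestor x
  exact ⟨r, ⟨hr, hrx⟩, fun s ⟨hs, hsx⟩ =>
    hsx.eq_of_isFixedPt (hg.isFixedPt s hs) (hg.isFixedPt r hr) hrx⟩

lemma not_isAncestor_apply (hg : IsRootedForest R g) (hr : r ∉ R) : ¬ IsAncestor g r (g r) := by
  rintro ⟨m, hm⟩
  obtain ⟨s, hs, hsr⟩ := hg.exists_isAncestor r
  have hper : IsPeriodicPt g (m + 1) r := hm
  exact hr (hsr.eq_of_isPeriodicPt (hg.isFixedPt s hs) hper m.succ_pos ▸ hs)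

lemma card_filter_not_isAncestor (hg : IsRootedForest R g) (w : α) :
    #{r ∈ R | ¬ IsAncestor g r w} = #R - 1 := by
  obtain ⟨r, ⟨hr, hrw⟩, huniq⟩ := hg.existsUnique_root w
  have hfilter : {s ∈ R | ¬ IsAncestor g s w} = R.erase r := by
    ext s
    simp only [mem_filter, mem_erase]
    exact ⟨fun hs => ⟨fun h => hs.2 (h ▸ hrw), hs.1⟩,
      fun hs => ⟨hs.2, fun h => hs.1 (huniq s ⟨hs.2, h⟩)⟩⟩
  rw [hfilter, card_erase_of_mem hr]

lemma conj (hg : IsRootedForest R g) (e : α ≃ β) :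
    IsRootedForest (R.map e.toEmbedding) (e.conj g) := by
  have he : Semiconj e g (e.conj g) := fun x => by simp
  refine ⟨fun s hs => ?_, fun x => ?_⟩
  · obtain ⟨r, hr, rfl⟩ := mem_map.1 hs
    exact (hg.isFixedPt r hr).map he
  · obtain ⟨r, hr, hrx⟩ := hg.exists_isAncestor (e.symm x)
    exact ⟨e r, mem_map_of_mem _ hr, by simpa using hrx.map he⟩

variable [DecidableEq α]

lemma update_erase (hg : IsRootedForest R g) (hw : ¬ IsAncestor g r w) :
    IsRootedForest (R.erase r) (update g r w) := by
  have root_of_not {x : α} (hx : ¬ IsAncestor g r x) :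
      ∃ s ∈ R.erase r, IsAncestor (update g r w) s x := by
    obtain ⟨s, hs, hsx⟩ := hg.exists_isAncestor x
    exact ⟨s, mem_erase.2 ⟨fun h => hx (h ▸ hsx), hs⟩, hsx.update_of_not hx w⟩
  refine ⟨fun s hs => ?_, fun x => ?_⟩
  · rw [IsFixedPt, update_of_ne (ne_of_mem_erase hs)]
    exact hg.isFixedPt s (mem_of_mem_erase hs)
  by_cases hx : IsAncestor g r x
  · obtain ⟨s, hs, hsw⟩ := root_of_not hw
    have hsr : IsAncestor (update g r w) s r := .of_apply (by rwa [update_self])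
    exact ⟨s, hs, hsr.trans ((isAncestor_update_self_iff w).2 hx)⟩
  · exact root_of_not hx

lemma update_of_erase (hg : IsRootedForest (R.erase r) g) (hr : r ∈ R) :
    IsRootedForest R (update g r r) := by
  refine ⟨fun s hs => ?_, fun x => ?_⟩
  · rcases eq_or_ne s r with rfl | hsr
    · exact update_self ..
    · exact (update_of_ne hsr ..).trans (hg.isFixedPt s (mem_erase.2 ⟨hsr, hs⟩))
  · by_cases hx : IsAncestor g r x
    · exact ⟨r, hr, (isAncestor_update_self_iff r).2 hx⟩
    · obtain ⟨s, hs, hsx⟩ := hg.exists_isAncestor x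
      exact ⟨s, mem_of_mem_erase hs, hsx.update_of_not hx r⟩

end IsRootedForest

section Counting

variable [Fintype α] [DecidableEq α] {R : Finset α} {g : α → α} {r s : α}

/-- The parent maps of the rooted forests with vertex set `α` and root set `R`. -/
noncomputable def rootedForests (R : Finset α) : Finset (α → α) :=
  {g | IsRootedForest R g}

@[simp]
lemma mem_rootedForests : g ∈ rootedForests R ↔ IsRootedForest R g := by
  simp [rootedForests]

lemma rootedForests_univ : rootedForests (univ : Finset α) = {id} := by
  ext g
  rw [mem_rootedForests, mem_singleton]
  refine ⟨fun hg => funext fun x => hg.isFixedPt x (mem_univ x), ?_⟩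
  rintro rfl
  exact ⟨fun _ _ => rfl, fun x => ⟨x, mem_univ x, .refl id x⟩⟩

lemma card_rootedForests_erase_le (hr : r ∈ R) (hs : s ∈ R) :
    #(rootedForests (R.erase r)) ≤ #(rootedForests (R.erase s)) := by
  have hmap : (R.erase r).map (Equiv.swap r s).toEmbedding = R.erase s := by
    rw [map_erase, map_perm]
    · simp
    · intro x hx
      obtain rfl | rfl := (Equiv.swap_apply_ne_self_iff.1 hx).2 <;> assumption
  refine card_le_card_of_injOn (Equiv.swap r s).conj (fun g hg => ?_)
    (Equiv.swap r s).conj.injective.injOn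
  rw [mem_coe, mem_rootedForests] at hg ⊢
  exact hmap ▸ hg.conj (Equiv.swap r s)

lemma card_rootedForests_erase_congr (hr : r ∈ R) (hs : s ∈ R) :
    #(rootedForests (R.erase r)) = #(rootedForests (R.erase s)) :=
  (card_rootedForests_erase_le hr hs).antisymm (card_rootedForests_erase_le hs hr)

lemma card_rootedForests_erase (hr : r ∈ R) :
    #(rootedForests (R.erase r)) =
      #{p ∈ rootedForests R ×ˢ univ | ¬ IsAncestor p.1 r p.2} := by
  refine card_nbij' (fun g => (update g r r, g r)) (fun p => update p.1 r p.2) ?_ ?_ ?_ ?_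
  · intro g hg
    have hg : IsRootedForest (R.erase r) g := by simpa using hg
    have hcut : ¬ IsAncestor (update g r r) r (g r) := by
      rw [isAncestor_update_self_iff]
      exact hg.not_isAncestor_apply (notMem_erase r R)
    simpa using ⟨hg.update_of_erase hr, hcut⟩
  · rintro ⟨g, w⟩ hgw
    have hgw : IsRootedForest R g ∧ ¬ IsAncestor g r w := by simpa using hgw
    simpa using hgw.1.update_erase hgw.2
  · intro g _
    simp
  · rintro ⟨g, w⟩ hgw
    have hgw : IsRootedForest R g ∧ ¬ IsAncestor g r w := by simpa using hgw
    have hfix : g r = r := hgw.1.isFixedPt r hr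
    simpa [update_eq_iff] using hfix.symm

lemma sum_card_rootedForests_erase (R : Finset α) :
    ∑ r ∈ R, #(rootedForests (R.erase r)) =
      #(rootedForests R) * Fintype.card α * (#R - 1) := by
  calc ∑ r ∈ R, #(rootedForests (R.erase r))
      = ∑ r ∈ R, #{p ∈ rootedForests R ×ˢ univ | ¬ IsAncestor p.1 r p.2} :=
        sum_congr rfl fun r hr => card_rootedForests_erase hr
    _ = ∑ p ∈ rootedForests R ×ˢ univ, #{r ∈ R | ¬ IsAncestor p.1 r p.2} :=
        sum_card_bipartiteAbove_eq_sum_card_bipartiteBelow _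
    _ = ∑ p ∈ rootedForests R ×ˢ (univ : Finset α), (#R - 1) :=
        sum_congr rfl fun p hp =>
          (mem_rootedForests.1 (mem_product.1 hp).1).card_filter_not_isAncestor p.2
    _ = #(rootedForests R) * Fintype.card α * (#R - 1) := by
        rw [sum_const, card_product, card_univ, smul_eq_mul]

lemma card_add_one_mul_card_rootedForests (hr : r ∉ R) :
    (#R + 1) * #(rootedForests R) = #R * Fintype.card α * #(rootedForests (insert r R)) := by
  have hsum := sum_card_rootedForests_erase (insert r R)
  rw [sum_congr rfl fun s hs => card_rootedForests_erase_congr hs (mem_insert_self r R), sum_const,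
    smul_eq_mul, erase_insert hr, card_insert_of_notMem hr, Nat.add_sub_cancel] at hsum
  rw [hsum]
  ring

theorem card_pow_mul_card_rootedForests [Nonempty α] (R : Finset α) :
    Fintype.card α ^ #R * #(rootedForests R) = #R * Fintype.card α ^ (Fintype.card α - 1) := by
  suffices ∀ S : Finset α, Fintype.card α ^ #Sᶜ * #(rootedForests Sᶜ) =
      #Sᶜ * Fintype.card α ^ (Fintype.card α - 1) by simpa using this Rᶜ
  intro S
  induction S using Finset.induction_on with
  | empty => simp [rootedForests_univ, mul_pow_sub_one]
  | insert r S hrS ih =>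
    rw [← insert_compl_insert hrS] at ih
    have hr : r ∉ (insert r S)ᶜ := by simp
    generalize (insert r S)ᶜ = R at ih hr ⊢
    rw [card_insert_of_notMem hr] at ih
    refine Nat.eq_of_mul_eq_mul_left (#R).succ_pos ?_
    calc (#R + 1) * (Fintype.card α ^ #R * #(rootedForests R))
        = Fintype.card α ^ #R * ((#R + 1) * #(rootedForests R)) := mul_left_comm ..
      _ = #R * (Fintype.card α ^ (#R + 1) * #(rootedForests (insert r R))) := by
          rw [card_add_one_mul_card_rootedForests hr]; ring
      _ = (#R + 1) * (#R * Fintype.card α ^ (Fintype.card α - 1)) := by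
          rw [ih, mul_left_comm]

end Counting

end RootedForests

section Labelled

open Function

variable {n k : ℕ}

/-- The self-map of `ℕ` that agrees with `f` on `{1,…,n}` and vanishes elsewhere, the form in which
`IsForestRootedAt` encodes parent maps. -/
noncomputable def extendZero (f : Finset.Icc 1 n → Finset.Icc 1 n) : ℕ → ℕ :=
  extend Subtype.val (fun i => (f i : ℕ)) 0

lemma extendZero_coe (f : Finset.Icc 1 n → Finset.Icc 1 n) (i : Finset.Icc 1 n) :
    extendZero f i = f i :=
  Subtype.val_injective.extend_apply _ _ i

lemma iterate_extendZero (f : Finset.Icc 1 n → Finset.Icc 1 n) (m : ℕ) (i : Finset.Icc 1 n) :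
    (extendZero f)^[m] i = (f^[m] i : ℕ) :=
  have hsemi : Semiconj Subtype.val f (extendZero f) := fun i => (extendZero_coe f i).symm
  ((hsemi.iterate_right m).eq i).symm

lemma extendZero_injective : Injective (extendZero (n := n)) :=
  fun f f' h => funext fun i => Subtype.ext (by rw [← extendZero_coe f, h, extendZero_coe])

lemma extendZero_of_notMem (f : Finset.Icc 1 n → Finset.Icc 1 n) {i : ℕ}
    (hi : i ∉ Finset.Icc 1 n) : extendZero f i = 0 :=
  extend_apply' _ _ _ fun ⟨j, hj⟩ => hi (hj ▸ j.2)

/-- The roots `1, …, k` as vertices of `{1,…,n}`. -/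
def initialRoots (n k : ℕ) : Finset (Finset.Icc 1 n) :=
  (Finset.Icc 1 k).subtype (· ∈ Finset.Icc 1 n)

lemma mem_initialRoots {i : Finset.Icc 1 n} : i ∈ initialRoots n k ↔ (i : ℕ) ≤ k := by
  have hi : 1 ≤ (i : ℕ) := (Finset.mem_Icc.1 i.2).1
  simp [initialRoots, hi]

lemma card_initialRoots (hkn : k ≤ n) : (initialRoots n k).card = k := by
  rw [initialRoots, Finset.card_subtype,
    Finset.filter_true_of_mem fun i hi => Finset.Icc_subset_Icc_right hkn hi,
    Nat.card_Icc, Nat.add_sub_cancel]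

lemma isForestRootedAt_extendZero_iff (hkn : k ≤ n) (f : Finset.Icc 1 n → Finset.Icc 1 n) :
    IsForestRootedAt n k (extendZero f) ↔ IsRootedForest (initialRoots n k) f := by
  constructor
  · rintro ⟨hroot, -, hreach, -⟩
    refine ⟨fun r hr => ?_, fun x => ?_⟩
    · have hfix := hroot r (Finset.mem_Icc.1 r.2).1 (mem_initialRoots.1 hr)
      exact Subtype.ext (extendZero_coe f r ▸ hfix)
    · obtain ⟨m, -, hm⟩ := hreach x (Finset.mem_Icc.1 x.2).1 (Finset.mem_Icc.1 x.2).2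
      rw [iterate_extendZero] at hm
      exact ⟨f^[m] x, mem_initialRoots.2 hm, m, rfl⟩
  · intro hf
    refine ⟨fun i hi hik => ?_, fun i hki hin => ?_, fun i hi hin => ?_, fun i hi => ?_⟩
    · lift i to Finset.Icc 1 n using Finset.mem_Icc.2 ⟨hi, hik.trans hkn⟩
      rw [extendZero_coe, hf.isFixedPt i (mem_initialRoots.2 hik)]
    · lift i to Finset.Icc 1 n using Finset.mem_Icc.2 ⟨by omega, hin⟩
      rw [extendZero_coe]
      exact Finset.mem_Icc.1 (f i).2
    · lift i to Finset.Icc 1 n using Finset.mem_Icc.2 ⟨hi, hin⟩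
      obtain ⟨r, hr, m, rfl⟩ := hf.exists_isAncestor i
      refine ⟨m, ?_⟩
      rw [iterate_extendZero]
      exact ⟨(Finset.mem_Icc.1 (f^[m] i).2).1, mem_initialRoots.1 hr⟩
    · exact extendZero_of_notMem f fun h => by rw [Finset.mem_Icc] at h; omega

lemma exists_extendZero_eq {g : ℕ → ℕ} (hg : IsForestRootedAt n k g) :
    ∃ f : Finset.Icc 1 n → Finset.Icc 1 n, extendZero f = g := by
  obtain ⟨hroot, hparent, -, hzero⟩ := hg
  have hmaps (i : Finset.Icc 1 n) : g i ∈ Finset.Icc 1 n := by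
    obtain ⟨hi, hin⟩ := Finset.mem_Icc.1 i.2
    by_cases hik : (i : ℕ) ≤ k
    · exact (hroot i hi hik).symm ▸ i.2
    · exact Finset.mem_Icc.2 (hparent i (not_le.1 hik) hin)
  refine ⟨fun i => ⟨g i, hmaps i⟩, funext fun i => ?_⟩
  by_cases hi : i ∈ Finset.Icc 1 n
  · exact extendZero_coe _ ⟨i, hi⟩
  · rw [extendZero_of_notMem _ hi, hzero i (by rw [Finset.mem_Icc] at hi; omega)]

lemma ncard_isForestRootedAt (hkn : k ≤ n) :
    {g : ℕ → ℕ | IsForestRootedAt n k g}.ncard = (rootedForests (initialRoots n k)).card := by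
  have himage : {g : ℕ → ℕ | IsForestRootedAt n k g} =
      extendZero (n := n) '' rootedForests (initialRoots n k) := by
    ext g
    simp only [Set.mem_ofPred_eq, Set.mem_image, Finset.mem_coe, mem_rootedForests]
    constructor
    · intro hg
      obtain ⟨f, rfl⟩ := exists_extendZero_eq hg
      exact ⟨f, (isForestRootedAt_extendZero_iff hkn f).1 hg, rfl⟩
    · rintro ⟨f, hf, rfl⟩
      exact (isForestRootedAt_extendZero_iff hkn f).2 hf
  rw [himage, Set.ncard_image_of_injective _ extendZero_injective, Set.ncard_coe_finset]

end Labelled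

/-- (Cayley) The number `f(n,k)` of rooted forests on `{1,…,n}`
rooted at `{1,…,k}` satisfies `n^k · f(n,k) = k · n^{n-1}`; in particular, for
`k ≤ n-1`, `f(n,k) = k·n^{n-k-1}`. -/
theorem stmt5 (n k : ℕ) (hn : 1 ≤ n) (hk1 : 1 ≤ k) (hkn : k ≤ n) :
    n ^ k * Set.ncard {g : ℕ → ℕ | IsForestRootedAt n k g} = k * n ^ (n - 1) ∧
    (k ≤ n - 1 →
      Set.ncard {g : ℕ → ℕ | IsForestRootedAt n k g} = k * n ^ (n - k - 1)) := by
  have : Nonempty (Finset.Icc 1 n) := ⟨1, Finset.mem_Icc.2 ⟨le_rfl, hn⟩⟩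
  have hcayley : n ^ k * Set.ncard {g : ℕ → ℕ | IsForestRootedAt n k g} = k * n ^ (n - 1) := by
    simpa [ncard_isForestRootedAt hkn, card_initialRoots hkn] using
      card_pow_mul_card_rootedForests (initialRoots n k)
  refine ⟨hcayley, fun hk => Nat.eq_of_mul_eq_mul_left (Nat.pow_pos hn : 0 < n ^ k) ?_⟩
  rw [hcayley, mul_left_comm, ← pow_add]
  congr 2
  omega

end WearyParking
end

section
/- For all integers n ≥ 2 and 1 ≤ k ≤ n, the identity k·n^{n−k−1} = Σ_{j=0}^{n−k} C(n−k, j)·(k+j−1)·(n−1)^{n−k−j−1} holds in the rational numbers (the exponents n−k−1 and n−k−j−1 may equal −1, interpreted as rational powers). -/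
/-!
With `m = n - k`, `x = n - 1` and `S = ∑ C(m,j) (k + j - 1) x^(m-j)`, the right-hand side is
`S / x`. The binomial theorem and its derivative give `S = (k - 1) n^m + m n^(m-1)`, hence
`n S = n^m ((k - 1) n + (n - k)) = n^m k (n - 1)`, and it remains to divide by `n x`.
-/

open scoped Classical

namespace WearyParking

section CommSemiring

variable {R : Type*} [CommSemiring R]

lemma sum_choose_mul_natCast_mul_pow (x y : R) (m : ℕ) :
    ∑ j ∈ Finset.range (m + 1), (m.choose j : R) * j * (x ^ j * y ^ (m - j)) =
      m * x * (x + y) ^ (m - 1) := by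
  cases m with
  | zero => simp
  | succ m =>
    have absorption (j : ℕ) :
        ((m + 1).choose (j + 1) : R) * (j + 1 : ℕ) = (m + 1 : ℕ) * (m.choose j : R) :=
      mod_cast congrArg (Nat.cast (R := R)) (Nat.add_one_mul_choose_eq m j).symm
    calc ∑ j ∈ Finset.range (m + 1 + 1),
          ((m + 1).choose j : R) * j * (x ^ j * y ^ (m + 1 - j))
        = ∑ j ∈ Finset.range (m + 1),
            (m + 1 : ℕ) * (m.choose j : R) * (x ^ (j + 1) * y ^ (m - j)) := by
          simp only [Finset.sum_range_succ' _ (m + 1), absorption, Nat.add_sub_add_right,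
            Nat.cast_zero, mul_zero, zero_mul, add_zero]
      _ = (m + 1 : ℕ) * x * (x + y) ^ m := by
          rw [add_pow, Finset.mul_sum]
          exact Finset.sum_congr rfl fun j _ => by ring

lemma sum_choose_mul_add_natCast_mul_pow (b x y : R) (m : ℕ) :
    ∑ j ∈ Finset.range (m + 1), (m.choose j : R) * (b + j) * (x ^ j * y ^ (m - j)) =
      b * (x + y) ^ m + m * x * (x + y) ^ (m - 1) := by
  rw [← sum_choose_mul_natCast_mul_pow, add_pow, Finset.mul_sum, ← Finset.sum_add_distrib]
  exact Finset.sum_congr rfl fun j _ => by ring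

end CommSemiring

lemma add_natCast_mul_sum_choose_mul_pow {R : Type*} [CommRing R] (a : R) (m : ℕ) :
    (a + m) * ∑ j ∈ Finset.range (m + 1), (m.choose j : R) * (a + j - 1) * (a + m - 1) ^ (m - j) =
      a * (a + m - 1) * (a + m) ^ m := by
  have sum_eq : ∑ j ∈ Finset.range (m + 1),
      (m.choose j : R) * (a + j - 1) * (a + m - 1) ^ (m - j) =
        (a - 1) * (a + m) ^ m + m * (a + m) ^ (m - 1) := by
    simpa only [one_pow, one_mul, mul_one, add_sub_cancel, sub_add_eq_add_sub] using
      sum_choose_mul_add_natCast_mul_pow (a - 1) 1 (a + m - 1) m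
  have natCast_mul_pow : (m : R) * ((a + m) * (a + m) ^ (m - 1)) = m * (a + m) ^ m := by
    rcases eq_or_ne m 0 with rfl | hm
    · simp
    · rw [mul_pow_sub_one hm]
  rw [sum_eq]
  linear_combination natCast_mul_pow

theorem stmt6_general {K : Type*} [Field K] (a : K) (m : ℕ) (h₀ : a + m ≠ 0)
    (h₁ : a + m - 1 ≠ 0) :
    a * (a + m) ^ ((m : ℤ) - 1) =
      ∑ j ∈ Finset.range (m + 1),
        (m.choose j : K) * (a + j - 1) * (a + m - 1) ^ ((m : ℤ) - j - 1) := by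
  have zpow_eq_pow_div : ∀ j ∈ Finset.range (m + 1),
      (m.choose j : K) * (a + j - 1) * (a + m - 1) ^ ((m : ℤ) - j - 1) =
        (m.choose j : K) * (a + j - 1) * (a + m - 1) ^ (m - j) / (a + m - 1) := by
    intro j hj
    rw [zpow_sub_one₀ h₁, ← Nat.cast_sub (Finset.mem_range_succ_iff.mp hj), zpow_natCast,
      ← mul_assoc, div_eq_mul_inv]
  rw [Finset.sum_congr rfl zpow_eq_pow_div, ← Finset.sum_div, eq_div_iff h₁, zpow_sub_one₀ h₀,
    zpow_natCast]
  refine mul_left_cancel₀ h₀ ?_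
  rw [add_natCast_mul_sum_choose_mul_pow]
  field_simp

/-- (Takács) For `n ≥ 2` and `1 ≤ k ≤ n`,
`k·n^{n-k-1} = Σ_{j=0}^{n-k} C(n-k,j)·(k+j-1)·(n-1)^{n-k-j-1}` in `ℚ`,
where the exponents are integers (possibly `-1`). -/
theorem stmt6 (n k : ℕ) (hn : 2 ≤ n) (hk1 : 1 ≤ k) (hkn : k ≤ n) :
    (k : ℚ) * (n : ℚ) ^ ((n : ℤ) - (k : ℤ) - 1) =
      ∑ j ∈ Finset.range (n - k + 1),
        (Nat.choose (n - k) j : ℚ) * ((k : ℚ) + (j : ℚ) - 1) *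
          ((n : ℚ) - 1) ^ ((n : ℤ) - (k : ℤ) - (j : ℤ) - 1) := by
  have hn₁ : (n : ℚ) - 1 ≠ 0 := sub_ne_zero.mpr (by exact_mod_cast (by lia : n ≠ 1))
  simpa [Nat.cast_sub hkn, show n ≠ 0 by lia, hn₁] using stmt6_general (k : ℚ) (n - k)

end WearyParking
end

section
/- Let T and T' be Cayley trees labelled with [n]_0 having the same set of records R and satisfying f_T(i) = f_{T'}(i) for every non-record vertex i ∈ {1,…,n} \ R (i.e., T and T' have the same bonsai sequence and differ only in their attachment sequences). Then the weary permutations of T and T' coincide: ω_T = ω_{T'}. In particular, the weary permutation of a Cayley tree depends only on its bonsai sequence and not on its attachment sequence. -/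
/-!
Let `S` be the set of vertices visited so far by the priority-first search. The next vertex is the
smallest non-record outside `S` with parent in `S`, if there is one, and otherwise the smallest
unvisited record. Neither description mentions the parent of a record.

The reason is that the records in `S` always form an initial segment of all the records. If `v` is a
non-record with parent in `S`, the largest vertex on the path from `v` to the root is a record
`r > v`, and `r` is in `S`, so every record below `r` is already visited and `v` precedes all the
unvisited ones. If there is no such `v`, let `m` be the smallest unvisited record. The last vertex
outside `S` on the path from `m` to the root may be visited next, so it is a record, hence at least
`m`; as the proper ancestors of `m` are smaller than `m`, it is `m` itself.
-/

open scoped Classical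

namespace WearyParking

open Function Set

theorem not_isPeriodicPt_of_iterate_eq_isFixedPt {α : Type*} {f : α → α} {x z : α} {j k : ℕ}
    (hz : IsFixedPt f z) (hj : f^[j] x = z) (hx : x ≠ z) (hk : 0 < k) : ¬ IsPeriodicPt f k x := by
  intro hper
  have hle : j ≤ k * j := Nat.le_mul_of_pos_left j hk
  apply hx
  calc x = f^[k * j] x := (hper.mul_const j).eq.symm
    _ = f^[k * j - j] (f^[j] x) := by rw [← iterate_add_apply, Nat.sub_add_cancel hle]
    _ = z := by rw [hj, iterate_fixed hz]

namespace IsCayleyTree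

variable {n : ℕ} {f : ℕ → ℕ} {v : ℕ}

theorem isFixedPt_zero (hf : IsCayleyTree n f) : IsFixedPt f 0 := hf.1

theorem mapsTo_Iic (hf : IsCayleyTree n f) : MapsTo f (Iic n) (Iic n) := by
  intro v hv
  rcases Nat.eq_zero_or_pos v with rfl | hpos
  · rw [hf.isFixedPt_zero.eq]
    exact hv
  · exact hf.2.2.1 v hpos hv

theorem iterate_le (hf : IsCayleyTree n f) (hv : v ≤ n) (k : ℕ) : f^[k] v ≤ n :=
  hf.mapsTo_Iic.iterate k hv

theorem exists_iterate_eq_zero_s8 (hf : IsCayleyTree n f) (hv : v ≤ n) : ∃ k, f^[k] v = 0 := by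
  rcases Nat.eq_zero_or_pos v with rfl | hpos
  · exact ⟨0, rfl⟩
  · exact hf.2.2.2 v hpos hv

theorem iterate_ne_self_s8 (hf : IsCayleyTree n f) (hpos : 1 ≤ v) (hv : v ≤ n) {k : ℕ} (hk : 1 ≤ k) :
    f^[k] v ≠ v := by
  obtain ⟨j, hj⟩ := hf.exists_iterate_eq_zero_s8 hv
  exact not_isPeriodicPt_of_iterate_eq_isFixedPt hf.isFixedPt_zero hj (by omega) hk

theorem exists_isRecord_iterate_ge (hf : IsCayleyTree n f) (hpos : 1 ≤ v) (hv : v ≤ n) :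
    ∃ k, IsRecord n f (f^[k] v) ∧ v ≤ f^[k] v := by
  have hbdd : BddAbove (range fun k => f^[k] v) := ⟨n, forall_mem_range.2 (hf.iterate_le hv)⟩
  obtain ⟨_, ⟨k, rfl⟩, hmax⟩ := hbdd.exists_isGreatest_of_nonempty (range_nonempty _)
  have hge : v ≤ f^[k] v := hmax ⟨0, rfl⟩
  refine ⟨k, ⟨hpos.trans hge, hf.iterate_le hv k, fun j hj => ?_⟩, hge⟩
  have hle : f^[j] (f^[k] v) ≤ f^[k] v := hmax ⟨j + k, iterate_add_apply f j k v⟩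
  exact hle.lt_of_ne (hf.iterate_ne_self_s8 (hpos.trans hge) (hf.iterate_le hv k) hj)

theorem exists_isRecord_mem_gt (hf : IsCayleyTree n f) {S : Set ℕ} (hS : MapsTo f S S)
    (hpos : 1 ≤ v) (hv : v ≤ n) (hrec : ¬ IsRecord n f v) (hmem : f v ∈ S) :
    ∃ r ∈ S, IsRecord n f r ∧ v < r := by
  obtain ⟨k, hr, hge⟩ := hf.exists_isRecord_iterate_ge hpos hv
  have hne : f^[k] v ≠ v := fun h => hrec (h ▸ hr)
  obtain _ | k := k
  · exact absurd rfl hne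
  · exact ⟨_, hS.iterate k hmem, hr, hge.lt_of_ne hne.symm⟩

end IsCayleyTree

/-- The vertices that the priority-first search may visit next when `S` is the set of visited
vertices. -/
def candidates (n : ℕ) (f : ℕ → ℕ) (S : Set ℕ) : Set ℕ :=
  {v | 1 ≤ v ∧ v ≤ n ∧ v ∉ S ∧ f v ∈ S}

/-- The non-records that the priority-first search may visit next when `S` is the set of visited
vertices. -/
def nonrecordCandidates (n : ℕ) (f : ℕ → ℕ) (S : Set ℕ) : Set ℕ :=
  {v ∈ candidates n f S | ¬ IsRecord n f v}

/-- The records outside the set `S` of visited vertices, whether or not their parents are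
in `S`. -/
def unvisitedRecords (n : ℕ) (f : ℕ → ℕ) (S : Set ℕ) : Set ℕ :=
  {r | IsRecord n f r ∧ r ∉ S}

/-- The invariant satisfied by the set `S` of visited vertices throughout the priority-first
search: it is a subtree containing the root, and its records form an initial segment of the
records. -/
structure SearchInvariant (n : ℕ) (f : ℕ → ℕ) (S : Set ℕ) : Prop where
  zero_mem : 0 ∈ S
  mapsTo : MapsTo f S S
  mem_of_lt : ∀ ⦃r s⦄, IsRecord n f r → r ∈ S → IsRecord n f s → s < r → s ∈ S

section Candidates

variable {n : ℕ} {f : ℕ → ℕ} {S : Set ℕ}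

theorem IsCayleyTree.exists_iterate_mem_candidates (hf : IsCayleyTree n f) (h0 : 0 ∈ S) {v : ℕ}
    (hv : v ≤ n) (hvS : v ∉ S) : ∃ k, f^[k] v ∈ candidates n f S := by
  obtain ⟨j, hj⟩ := hf.exists_iterate_eq_zero_s8 hv
  obtain ⟨k, hk, hk'⟩ := Nat.exists_not_and_succ_of_not_zero_of_exists
    (p := fun k => f^[k] v ∈ S) hvS ⟨j, by rwa [hj]⟩
  have hne : f^[k] v ≠ 0 := fun h => hk (h ▸ h0)
  exact ⟨k, Nat.one_le_iff_ne_zero.2 hne, hf.iterate_le hv k, hk, iterate_succ_apply' f k v ▸ hk'⟩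

theorem candidates_subset_unvisitedRecords (h : nonrecordCandidates n f S = ∅) :
    candidates n f S ⊆ unvisitedRecords n f S := fun _ hv =>
  ⟨by_contra fun hrec => h.le ⟨hv, hrec⟩, hv.2.2.1⟩

namespace SearchInvariant

theorem lt_of_mem_nonrecordCandidates (hS : SearchInvariant n f S) (hf : IsCayleyTree n f)
    {v r : ℕ} (hv : v ∈ nonrecordCandidates n f S) (hr : r ∈ unvisitedRecords n f S) : v < r := by
  obtain ⟨⟨hpos, hvn, -, hmem⟩, hrec⟩ := hv
  obtain ⟨w, hwS, hw, hvw⟩ := hf.exists_isRecord_mem_gt hS.mapsTo hpos hvn hrec hmem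
  by_contra! hrv
  exact hr.2 (hS.mem_of_lt hw hwS hr.1 (hrv.trans_lt hvw))

theorem mem_candidates_of_isLeast (hS : SearchInvariant n f S) (hf : IsCayleyTree n f)
    (h : nonrecordCandidates n f S = ∅) {m : ℕ} (hm : IsLeast (unvisitedRecords n f S) m) :
    m ∈ candidates n f S := by
  obtain ⟨⟨⟨-, hmn, hanc⟩, hmS⟩, hmin⟩ := hm
  obtain ⟨k, hk⟩ := hf.exists_iterate_mem_candidates hS.zero_mem hmn hmS
  have hle : m ≤ f^[k] m := hmin (candidates_subset_unvisitedRecords h hk)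
  obtain rfl : k = 0 := by
    by_contra hk0
    exact (hanc k (Nat.one_le_iff_ne_zero.2 hk0)).not_ge hle
  exact hk

theorem sInf_candidates_of_nonempty (hS : SearchInvariant n f S) (hf : IsCayleyTree n f)
    (h : (nonrecordCandidates n f S).Nonempty) :
    sInf (candidates n f S) = sInf (nonrecordCandidates n f S) := by
  have hmem := Nat.sInf_mem h
  refine IsLeast.csInf_eq ⟨hmem.1, fun v hv => ?_⟩
  by_cases hrec : IsRecord n f v
  · exact (hS.lt_of_mem_nonrecordCandidates hf hmem ⟨hrec, hv.2.2.1⟩).le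
  · exact Nat.sInf_le ⟨hv, hrec⟩

theorem sInf_candidates_of_eq_empty (hS : SearchInvariant n f S) (hf : IsCayleyTree n f)
    (h : nonrecordCandidates n f S = ∅) :
    sInf (candidates n f S) = sInf (unvisitedRecords n f S) := by
  have hsub := candidates_subset_unvisitedRecords h
  rcases (unvisitedRecords n f S).eq_empty_or_nonempty with hempty | hne
  · rw [hempty, subset_eq_empty hsub hempty]
  · have hleast : IsLeast (unvisitedRecords n f S) (sInf (unvisitedRecords n f S)) :=
      ⟨Nat.sInf_mem hne, fun _ => Nat.sInf_le⟩
    exact IsLeast.csInf_eq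
      ⟨hS.mem_candidates_of_isLeast hf h hleast, fun _ hv => hleast.2 (hsub hv)⟩

theorem mem_of_lt_sInf_candidates (hS : SearchInvariant n f S) (hf : IsCayleyTree n f)
    (hrec : IsRecord n f (sInf (candidates n f S))) {s : ℕ} (hs : IsRecord n f s)
    (hlt : s < sInf (candidates n f S)) : s ∈ S := by
  rcases (nonrecordCandidates n f S).eq_empty_or_nonempty with hempty | hne
  · rw [hS.sInf_candidates_of_eq_empty hf hempty] at hlt
    by_contra hsS
    exact Nat.notMem_of_lt_sInf hlt ⟨hs, hsS⟩
  · rw [hS.sInf_candidates_of_nonempty hf hne] at hrec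
    exact absurd hrec (Nat.sInf_mem hne).2

theorem insert_sInf_candidates (hS : SearchInvariant n f S) (hf : IsCayleyTree n f) :
    SearchInvariant n f (insert (sInf (candidates n f S)) S) := by
  rcases (candidates n f S).eq_empty_or_nonempty with hempty | hne
  · -- Once every vertex is visited, the search keeps repeating the junk value `sInf ∅ = 0`.
    rwa [hempty, Nat.sInf_empty, insert_eq_of_mem hS.zero_mem]
  · have hparent : f (sInf (candidates n f S)) ∈ S := (Nat.sInf_mem hne).2.2.2
    refine ⟨mem_insert_of_mem _ hS.zero_mem, ?_, ?_⟩
    · rintro v (rfl | hv)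
      · exact mem_insert_of_mem _ hparent
      · exact mem_insert_of_mem _ (hS.mapsTo hv)
    · rintro r s hr (rfl | hrS) hs hlt
      · exact mem_insert_of_mem _ (hS.mem_of_lt_sInf_candidates hf hr hs hlt)
      · exact mem_insert_of_mem _ (hS.mem_of_lt hr hrS hs hlt)

end SearchInvariant

end Candidates

section Weary

variable {n : ℕ} {f g : ℕ → ℕ}

theorem wearyList_succ (n : ℕ) (f : ℕ → ℕ) (i : ℕ) :
    wearyList n f (i + 1) =
      wearyList n f i ++ [sInf (candidates n f {v | v ∈ wearyList n f i})] :=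
  rfl

theorem searchInvariant_singleton_zero (hf : IsFixedPt f 0) : SearchInvariant n f {0} where
  zero_mem := rfl
  mapsTo := mapsTo_singleton.2 hf
  mem_of_lt := by
    rintro r s - rfl - hlt
    exact absurd hlt s.not_lt_zero

theorem IsCayleyTree.searchInvariant_wearyList (hf : IsCayleyTree n f) (i : ℕ) :
    SearchInvariant n f {v | v ∈ wearyList n f i} := by
  induction i with
  | zero =>
    convert searchInvariant_singleton_zero hf.isFixedPt_zero using 1
    ext v
    simp only [wearyList, List.mem_singleton, mem_ofPred_eq, mem_singleton_iff]
  | succ i ih =>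
    convert ih.insert_sInf_candidates hf using 1
    ext v
    simp only [wearyList_succ, List.mem_append, List.mem_singleton, mem_ofPred_eq, mem_insert_iff,
      or_comm]

theorem nonrecordCandidates_congr (hrec : ∀ i, IsRecord n f i ↔ IsRecord n g i)
    (hpar : ∀ i, 1 ≤ i → i ≤ n → ¬ IsRecord n f i → f i = g i) (S : Set ℕ) :
    nonrecordCandidates n f S = nonrecordCandidates n g S := by
  ext v
  simp only [nonrecordCandidates, candidates, mem_ofPred_eq, ← hrec]
  refine and_congr_left fun hv => and_congr_right fun hpos => and_congr_right fun hvn => ?_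
  rw [hpar v hpos hvn hv]

theorem unvisitedRecords_congr (hrec : ∀ i, IsRecord n f i ↔ IsRecord n g i) (S : Set ℕ) :
    unvisitedRecords n f S = unvisitedRecords n g S := by
  simp only [unvisitedRecords, hrec]

theorem sInf_candidates_congr (hf : IsCayleyTree n f) (hg : IsCayleyTree n g)
    (hrec : ∀ i, IsRecord n f i ↔ IsRecord n g i)
    (hpar : ∀ i, 1 ≤ i → i ≤ n → ¬ IsRecord n f i → f i = g i) {S : Set ℕ}
    (hfS : SearchInvariant n f S) (hgS : SearchInvariant n g S) :
    sInf (candidates n f S) = sInf (candidates n g S) := by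
  have hnon := nonrecordCandidates_congr hrec hpar S
  rcases (nonrecordCandidates n f S).eq_empty_or_nonempty with hempty | hne
  · rw [hfS.sInf_candidates_of_eq_empty hf hempty,
      hgS.sInf_candidates_of_eq_empty hg (hnon ▸ hempty), unvisitedRecords_congr hrec]
  · rw [hfS.sInf_candidates_of_nonempty hf hne, hgS.sInf_candidates_of_nonempty hg (hnon ▸ hne),
      hnon]

theorem wearyList_congr (hf : IsCayleyTree n f) (hg : IsCayleyTree n g)
    (hrec : ∀ i, IsRecord n f i ↔ IsRecord n g i)
    (hpar : ∀ i, 1 ≤ i → i ≤ n → ¬ IsRecord n f i → f i = g i) (i : ℕ) :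
    wearyList n f i = wearyList n g i := by
  induction i with
  | zero => rfl
  | succ i ih =>
    have hgS := hg.searchInvariant_wearyList i
    rw [← ih] at hgS
    rw [wearyList_succ, wearyList_succ, ← ih,
      sInf_candidates_congr hf hg hrec hpar (hf.searchInvariant_wearyList i) hgS]

end Weary

/-- Two Cayley trees with the same set of records and the same
parent function on non-record vertices (i.e. with the same bonsai sequence) have
the same weary permutation. -/
theorem stmt8 (n : ℕ) (f g : ℕ → ℕ) (hf : IsCayleyTree n f) (hg : IsCayleyTree n g)
    (hrec : ∀ i, IsRecord n f i ↔ IsRecord n g i)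
    (hpar : ∀ i, 1 ≤ i → i ≤ n → ¬ IsRecord n f i → f i = g i) :
    ∀ i, i ≤ n → weary n f i = weary n g i := by
  intro i _
  rw [weary, weary, wearyList_congr hf hg hrec hpar]

end WearyParking
end

section
/- Let π be a parking function of length n with bird's-eye permutation ω_π, and let PT(π) be its parking tree with parent function f_π. Then every non-root ancestor of a vertex v ∈ {1,…,n} in PT(π) lies strictly to the left of v in the word ω_π(1) ω_π(2) ⋯ ω_π(n): for every j ≥ 1 with f_π^j(v) ≠ 0, one has ω_π^{-1}(f_π^j(v)) < ω_π^{-1}(v). -/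
/-!
A non-root parent of `v` is the car parked at spot `π(v) - 1`, whereas `v` itself parks at a spot
`≥ π(v)`, and `ω_π⁻¹` assigns to each car its spot. So `ω_π⁻¹` strictly decreases along every edge
towards a non-root vertex.
-/

open scoped Classical

namespace WearyParking

theorem apply_iterate_lt_of_iterate_ne {α β : Type*} [Preorder β] {f : α → α} {g : α → β} {r : α}
    (hr : Function.IsFixedPt f r) (hlt : ∀ a, f a ≠ r → g (f a) < g a) {a : α} {j : ℕ}
    (hj : 1 ≤ j) (h : f^[j] a ≠ r) : g (f^[j] a) < g a := by
  induction j, hj using Nat.le_induction with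
  | base => exact hlt a h
  | succ j _ ih =>
    rw [Function.iterate_succ_apply'] at h ⊢
    have hne : f^[j] a ≠ r := fun heq => h (heq ▸ hr)
    exact (hlt _ h).trans (ih hne)

section Parking

variable (π : ℕ → ℕ)

theorem length_spotList (c : ℕ) : (spotList π c).length = c := by
  induction c with
  | zero => rfl
  | succ c ih => simp [spotList, ih]

theorem spot_succ (c : ℕ) :
    spot π (c + 1) = sInf {s | π (c + 1) ≤ s ∧ s ∉ spotList π c} := by
  simp [spot, spotList, length_spotList]

theorem spotList_succ (c : ℕ) : spotList π (c + 1) = spotList π c ++ [spot π (c + 1)] := by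
  rw [spot_succ, spotList]

theorem exists_ge_notMem_spotList (c m : ℕ) : ∃ s, m ≤ s ∧ s ∉ spotList π c := by
  simpa using (Set.Ici_infinite m).exists_notMem_finset (spotList π c).toFinset

theorem le_spot_succ_and_notMem_spotList (c : ℕ) :
    π (c + 1) ≤ spot π (c + 1) ∧ spot π (c + 1) ∉ spotList π c := by
  rw [spot_succ]
  exact Nat.sInf_mem (exists_ge_notMem_spotList π c (π (c + 1)))

variable {c d : ℕ}

theorem le_spot (hc : 1 ≤ c) : π c ≤ spot π c := by
  obtain ⟨k, rfl⟩ := Nat.exists_eq_add_of_le' hc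
  exact (le_spot_succ_and_notMem_spotList π k).1

theorem spot_mem_spotList (hc : 1 ≤ c) (hcd : c ≤ d) : spot π c ∈ spotList π d := by
  induction d, hcd using Nat.le_induction with
  | base =>
    obtain ⟨k, rfl⟩ := Nat.exists_eq_add_of_le' hc
    simp [spotList_succ]
  | succ d _ ih => simp [spotList_succ, ih]

theorem spot_ne_of_lt (hc : 1 ≤ c) (hcd : c < d) : spot π c ≠ spot π d := by
  obtain ⟨k, rfl⟩ := Nat.exists_eq_add_of_le' (hc.trans hcd.le)
  intro h
  exact (le_spot_succ_and_notMem_spotList π k).2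
    (h ▸ spot_mem_spotList π hc (Nat.lt_succ_iff.mp hcd))

theorem spot_injOn : Set.InjOn (spot π) (Set.Ici 1) := by
  intro c hc d hd h
  by_contra hne
  rcases lt_or_gt_of_ne hne with hlt | hlt
  · exact spot_ne_of_lt π hc hlt h
  · exact spot_ne_of_lt π hd hlt h.symm

end Parking

section BirdsEye

variable {n : ℕ} {π : ℕ → ℕ} {i v : ℕ}

theorem birdsEye_zero (n : ℕ) (π : ℕ → ℕ) : birdsEye n π 0 = 0 := if_pos rfl

theorem spot_birdsEye (h : birdsEye n π i ≠ 0) : spot π (birdsEye n π i) = i := by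
  have hi : i ≠ 0 := fun hi => h (hi ▸ birdsEye_zero n π)
  rw [birdsEye, if_neg hi] at h ⊢
  -- The infimum is nonzero, so it is not the junk value `sInf ∅ = 0`.
  exact (Nat.sInf_mem (Nat.nonempty_of_pos_sInf (Nat.pos_of_ne_zero h))).2.2

theorem birdsEye_spot (h1 : 1 ≤ v) (hn : v ≤ n) (hs : spot π v ≠ 0) :
    birdsEye n π (spot π v) = v := by
  have hcars : {c | 1 ≤ c ∧ c ≤ n ∧ spot π c = spot π v} = {v} := by
    ext c
    constructor
    · rintro ⟨hc, -, h⟩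
      exact spot_injOn π hc h1 h
    · rintro rfl
      exact ⟨h1, hn, rfl⟩
  rw [birdsEye, if_neg hs, hcars, csInf_singleton]

theorem birdsEyeInv_eq_spot (h1 : 1 ≤ v) (hn : v ≤ n) (hs : spot π v ≠ 0) :
    birdsEyeInv n π v = spot π v := by
  have hspots : {i | birdsEye n π i = v} = {spot π v} := by
    ext i
    constructor
    · rintro rfl
      exact (spot_birdsEye (Nat.one_le_iff_ne_zero.mp h1)).symm
    · rintro rfl
      exact birdsEye_spot h1 hn hs
  rw [birdsEyeInv, hspots, csInf_singleton]

theorem birdsEyeInv_birdsEye_le (n : ℕ) (π : ℕ → ℕ) (i : ℕ) :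
    birdsEyeInv n π (birdsEye n π i) ≤ i :=
  Nat.sInf_le rfl

end BirdsEye

section ParkingTree

variable {n : ℕ} {π : ℕ → ℕ} {v : ℕ}

theorem ptParent_zero (n : ℕ) (π : ℕ → ℕ) : ptParent n π 0 = 0 := by
  simp [ptParent]

theorem birdsEyeInv_ptParent_lt (h : ptParent n π v ≠ 0) :
    birdsEyeInv n π (ptParent n π v) < birdsEyeInv n π v := by
  obtain ⟨h1, hn⟩ : 1 ≤ v ∧ v ≤ n := by
    by_contra hv
    exact h (if_neg hv)
  have hparent : ptParent n π v = birdsEye n π (π v - 1) := if_pos ⟨h1, hn⟩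
  have hpref : π v - 1 ≠ 0 := fun h0 => h (by rw [hparent, h0, birdsEye_zero])
  have hle : π v ≤ spot π v := le_spot π h1
  calc birdsEyeInv n π (ptParent n π v)
      ≤ π v - 1 := hparent ▸ birdsEyeInv_birdsEye_le n π (π v - 1)
    _ < spot π v := by omega
    _ = birdsEyeInv n π v := (birdsEyeInv_eq_spot h1 hn (by omega)).symm

end ParkingTree

theorem stmt10_general (n : ℕ) (π : ℕ → ℕ) {v j : ℕ} (hj : 1 ≤ j)
    (h : (ptParent n π)^[j] v ≠ 0) :
    birdsEyeInv n π ((ptParent n π)^[j] v) < birdsEyeInv n π v :=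
  apply_iterate_lt_of_iterate_ne (ptParent_zero n π) (fun _ => birdsEyeInv_ptParent_lt) hj h

/-- Every non-root ancestor of a vertex `v` in the parking tree
`PT(π)` lies strictly to the left of `v` in the word `ω_π(1) ⋯ ω_π(n)`. -/
theorem stmt10 (n : ℕ) (π : ℕ → ℕ) (hπ : IsParkingFun n π) :
    ∀ v, 1 ≤ v → v ≤ n → ∀ j, 1 ≤ j → (ptParent n π)^[j] v ≠ 0 →
      birdsEyeInv n π ((ptParent n π)^[j] v) < birdsEyeInv n π v :=
  fun _ _ _ _ hj h => stmt10_general n π hj h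

end WearyParking
end
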